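/- Let G be a directed graph on [n]. The poset P_G determined by its reduced canonical form is hierarchical if and only if every linear code D ⊆ F_q^n admits a G-canonical decomposition, i.e., D is G-equivalent to a code D_1 ⊕ ⋯ ⊕ D_{h_G} where supp(D_i) ⊆ V_i for each level i. -/

import Mathlib

/-- The closure of a set of vertices `X` in the directed graph with edge relation `E`. -/
def gclosure {n : ℕ} (E : Fin n → Fin n → Prop) (X : Set (Fin n)) : Set (Fin n) :=
  {v | ∃ u ∈ X, Relation.ReflTransGen E u v}

/-- The `G`-weight of a word `x`. -/
noncomputable def gweight {n : ℕ} {F : Type*} [Field F] (E : Fin n → Fin n → Prop)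
    (x : Fin n → F) : ℕ :=
  (gclosure E {i | x i ≠ 0}).ncard

/-- `u` dominates `v`: `v` is reachable from `u` by a directed path. -/
def gdom {n : ℕ} (E : Fin n → Fin n → Prop) : Fin n → Fin n → Prop :=
  Relation.ReflTransGen E

/-- Clique equivalence: `u` and `v` dominate each other. -/
def cliqueSetoid {n : ℕ} (E : Fin n → Fin n → Prop) : Setoid (Fin n) where
  r u v := gdom E u v ∧ gdom E v u
  iseqv := ⟨fun _ => ⟨Relation.ReflTransGen.refl, Relation.ReflTransGen.refl⟩,
    fun h => ⟨h.2, h.1⟩,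
    fun h₁ h₂ => ⟨h₁.1.trans h₂.1, h₂.2.trans h₁.2⟩⟩

/-- The set of classes `V′` of the reduced canonical form of `G`. -/
def Vred {n : ℕ} (E : Fin n → Fin n → Prop) : Type :=
  Quotient (cliqueSetoid E)

/-- The projection `π` from vertices to their classes. -/
def gpi {n : ℕ} (E : Fin n → Fin n → Prop) (v : Fin n) : Vred E :=
  Quotient.mk (cliqueSetoid E) v

/-- The order of the poset `P_G` on the classes: `π(v) ⪯ π(u)` iff `u` dominates `v`. -/
def ple {n : ℕ} (E : Fin n → Fin n → Prop) (a b : Vred E) : Prop :=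
  ∃ u v : Fin n, gpi E v = a ∧ gpi E u = b ∧ gdom E u v

/-- The weight `L(a)` of a class: the number of vertices in it. -/
noncomputable def lwt {n : ℕ} (E : Fin n → Fin n → Prop) (a : Vred E) : ℕ :=
  {v : Fin n | gpi E v = a}.ncard

/-- The height of `a` in `P_G`: the maximum cardinality of a chain of `P_G` having `a`
as its maximal element. -/
noncomputable def hgt {n : ℕ} (E : Fin n → Fin n → Prop) (a : Vred E) : ℕ :=
  sSup {k | ∃ c : Set (Vred E), c.ncard = k ∧ a ∈ c ∧ (∀ x ∈ c, ple E x a) ∧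
    ∀ x ∈ c, ∀ y ∈ c, ple E x y ∨ ple E y x}

/-- `P_G` is hierarchical: every element of height `i > 1` lies strictly above every
element of height `i − 1`. -/
def Hierarchical {n : ℕ} (E : Fin n → Fin n → Prop) : Prop :=
  ∀ a b : Vred E, 1 < hgt E a → hgt E b + 1 = hgt E a → (ple E b a ∧ b ≠ a)

/-- `G` satisfies the Unique Decomposition Property: any two subsets of a level of `P_G`
with the same total `L`-weight are matched by an `L`-preserving bijection. -/
def UDP {n : ℕ} (E : Fin n → Fin n → Prop) : Prop :=
  ∀ (i : ℕ) (S S' : Set (Vred E)),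
    S ⊆ {a | hgt E a = i} → S' ⊆ {a | hgt E a = i} →
    (∑ᶠ a ∈ S, lwt E a) = (∑ᶠ a ∈ S', lwt E a) →
    ∃ g : Vred E → Vred E, Set.BijOn g S S' ∧ ∀ a ∈ S, lwt E (g a) = lwt E a

/-!
A linear isometry preserves the property of a word `x` of having an apex, that is, a vertex of
`supp x` dominating all of `supp x`: there is one exactly if `x` is not in the span of the words of
smaller weight. It also preserves the height of the apex, because for words `x`, `y` with apexes
`u`, `v` one has `π(v) ≺ π(u)` iff `w(y) < w(x)` and `w(x + y) ≤ w(x)`. If `h(v) < h(u)` but `u`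
does not dominate `v`, it follows that no isometry maps `e_u + e_v` into a single level, so the
line it spans has no canonical decomposition.

Conversely, filter the coordinates by level. Adding a lower-level correction `N z` to each leading
part `z` of words of `D` gives a word of `D`, and `D` is the image under `1 + N` of the sum of its
spaces of leading parts. In a hierarchical poset the terms of a word below its top level do not
affect its weight, so `1 + N` is an isometry.
-/

section Height

variable {α : Type*} [PartialOrder α] [Finite α]

lemma height_lt_top_of_finite (a : α) : Order.height a < ⊤ := by
  have := Fintype.ofFinite α
  refine lt_top_iff_ne_top.2 fun h => ?_
  obtain ⟨p, -, hp⟩ := Order.height_eq_top_iff.1 h (Fintype.card α)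
  exact (LTSeries.length_lt_card p).ne hp

lemma strictMono_toNat_height : StrictMono fun a : α => (Order.height a).toNat := fun a b h => by
  rw [← Nat.cast_lt (α := ℕ∞), ENat.natCast_toNat (height_lt_top_of_finite a).ne,
    ENat.natCast_toNat (height_lt_top_of_finite b).ne]
  exact Order.height_strictMono h (height_lt_top_of_finite a)

lemma ncard_le_toNat_height_add_one {a : α} {c : Set α} (hca : ∀ x ∈ c, x ≤ a)
    (hc : ∀ x ∈ c, ∀ y ∈ c, x ≤ y ∨ y ≤ x) : c.ncard ≤ (Order.height a).toNat + 1 := by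
  have hmaps : ∀ x ∈ c, (Order.height x).toNat ∈ Set.Iio ((Order.height a).toNat + 1) := fun x hx =>
    Nat.lt_succ_of_le (strictMono_toNat_height.monotone (hca x hx))
  have hinj : c.InjOn fun x => (Order.height x).toNat := fun x hx y hy hxy => by
    by_contra hne
    rcases hc x hx y hy with h | h
    · exact (strictMono_toNat_height (h.lt_of_ne hne)).ne hxy
    · exact (strictMono_toNat_height (h.lt_of_ne' hne)).ne' hxy
  simpa using Set.ncard_le_ncard_of_injOn _ hmaps hinj (Set.finite_Iio _)

lemma isGreatest_ncard_chain (a : α) :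
    IsGreatest {k | ∃ c : Set α, c.ncard = k ∧ a ∈ c ∧ (∀ x ∈ c, x ≤ a) ∧
      ∀ x ∈ c, ∀ y ∈ c, x ≤ y ∨ y ≤ x} ((Order.height a).toNat + 1) := by
  constructor
  · obtain ⟨p, rfl, hp⟩ := Order.exists_series_of_height_eq_coe a
      (ENat.natCast_toNat (height_lt_top_of_finite a).ne).symm
    refine ⟨Set.range p, ?_, ⟨Fin.last _, rfl⟩, ?_, ?_⟩
    · rw [Set.ncard_range_of_injective p.strictMono.injective, Nat.card_fin, hp]
    · rintro _ ⟨i, rfl⟩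
      exact p.strictMono.monotone i.le_last
    · rintro _ ⟨i, rfl⟩ _ ⟨j, rfl⟩
      exact (le_total i j).imp (p.strictMono.monotone ·) (p.strictMono.monotone ·)
  · rintro _ ⟨c, rfl, -, hca, hc⟩
    exact ncard_le_toNat_height_add_one hca hc

end Height

section ReducedPoset

variable {n : ℕ} {E : Fin n → Fin n → Prop}

instance : Finite (Vred E) := Quotient.finite _

lemma gpi_surjective : Function.Surjective (gpi E) := Quotient.mk_surjective

lemma gpi_eq_gpi_iff {u v : Fin n} : gpi E u = gpi E v ↔ gdom E u v ∧ gdom E v u :=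
  Quotient.eq

lemma ple_gpi_gpi_iff {u v : Fin n} : ple E (gpi E v) (gpi E u) ↔ gdom E u v := by
  refine ⟨?_, fun h => ⟨u, v, rfl, rfl, h⟩⟩
  rintro ⟨u', v', hv, hu, h⟩
  exact ((gpi_eq_gpi_iff.1 hu).2.trans h).trans (gpi_eq_gpi_iff.1 hv).1

instance : PartialOrder (Vred E) where
  le := ple E
  le_refl := gpi_surjective.forall.2 fun _ => ple_gpi_gpi_iff.2 .refl
  le_trans := gpi_surjective.forall₃.2 fun _ _ _ h₁ h₂ =>
    ple_gpi_gpi_iff.2 ((ple_gpi_gpi_iff.1 h₂).trans (ple_gpi_gpi_iff.1 h₁))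
  le_antisymm := gpi_surjective.forall₂.2 fun _ _ h₁ h₂ =>
    gpi_eq_gpi_iff.2 ⟨ple_gpi_gpi_iff.1 h₂, ple_gpi_gpi_iff.1 h₁⟩

lemma gpi_le_gpi_iff {u v : Fin n} : gpi E v ≤ gpi E u ↔ gdom E u v := ple_gpi_gpi_iff

lemma gpi_lt_gpi_iff {u v : Fin n} : gpi E v < gpi E u ↔ gdom E u v ∧ ¬ gdom E v u := by
  rw [lt_iff_le_not_ge, gpi_le_gpi_iff, gpi_le_gpi_iff]

lemma hgt_eq_toNat_height_add_one (a : Vred E) : hgt E a = (Order.height a).toNat + 1 :=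
  (isGreatest_ncard_chain a).csSup_eq

lemma one_le_hgt (a : Vred E) : 1 ≤ hgt E a :=
  hgt_eq_toNat_height_add_one a ▸ Nat.le_add_left 1 _

lemma hgt_strictMono : StrictMono (hgt E) := fun b a h => by
  simpa only [hgt_eq_toNat_height_add_one, Nat.add_lt_add_iff_right] using
    strictMono_toNat_height h

lemma exists_lt_hgt_add_one_eq {a : Vred E} (ha : 1 < hgt E a) :
    ∃ b < a, hgt E b + 1 = hgt E a := by
  obtain ⟨k, hk⟩ : ∃ k, hgt E a = k + 1 + 1 := ⟨hgt E a - 2, by omega⟩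
  have hak : Order.height a = (k + 1 : ℕ) := by
    rw [← ENat.natCast_toNat (height_lt_top_of_finite a).ne, Nat.cast_inj]
    rwa [hgt_eq_toNat_height_add_one, Nat.add_right_cancel_iff] at hk
  obtain ⟨b, hba, hb⟩ := (Order.coe_lt_height_iff (n := k) (height_lt_top_of_finite a)).1
    (hak ▸ Nat.cast_lt.2 k.lt_succ_self)
  exact ⟨b, hba, by rw [hk, hgt_eq_toNat_height_add_one, hb, ENat.toNat_natCast]⟩

lemma Hierarchical.lt_of_hgt_lt (H : Hierarchical E) {a b : Vred E} (h : hgt E b < hgt E a) :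
    b < a := by
  have hb := one_le_hgt b
  by_cases hab : hgt E b + 1 = hgt E a
  · have := H a b (by omega) hab
    exact lt_of_le_of_ne this.1 this.2
  · obtain ⟨c, hca, hc⟩ := exists_lt_hgt_add_one_eq (a := a) (by omega)
    exact (H.lt_of_hgt_lt (a := c) (by omega)).trans hca
termination_by hgt E a

lemma hierarchical_of_forall_hgt_lt (h : ∀ u v, hgt E (gpi E v) < hgt E (gpi E u) → gdom E u v) :
    Hierarchical E := by
  refine gpi_surjective.forall₂.2 fun u v _ hvu => ⟨ple_gpi_gpi_iff.2 (h u v (by omega)), ?_⟩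
  intro heq
  rw [heq] at hvu
  omega

end ReducedPoset

section Weight

variable {n : ℕ} {E : Fin n → Fin n → Prop}

lemma gclosure_subset_gclosure {X Y : Set (Fin n)} (h : X ⊆ gclosure E Y) :
    gclosure E X ⊆ gclosure E Y := by
  rintro v ⟨u, hu, huv⟩
  obtain ⟨w, hw, hwu⟩ := h hu
  exact ⟨w, hw, hwu.trans huv⟩

variable {F : Type*} [Field F] {x y : Fin n → F}

lemma gweight_le_gweight (h : ∀ i, x i ≠ 0 → ∃ u, y u ≠ 0 ∧ gdom E u i) :
    gweight E x ≤ gweight E y :=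
  Set.ncard_le_ncard (gclosure_subset_gclosure h)

lemma gweight_lt_gweight (h : ∀ i, x i ≠ 0 → ∃ u, y u ≠ 0 ∧ gdom E u i) {j : Fin n}
    (hj : y j ≠ 0) (hxj : ∀ i, x i ≠ 0 → ¬ gdom E i j) : gweight E x < gweight E y := by
  refine Set.ncard_lt_ncard ⟨gclosure_subset_gclosure h, fun hyx => ?_⟩
  obtain ⟨i, hi, hij⟩ := hyx ⟨j, hj, .refl⟩
  exact hxj i hi hij

lemma gweight_zero : gweight E (0 : Fin n → F) = 0 := by
  simp [gweight, gclosure]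

lemma gweight_pos (hx : x ≠ 0) : 0 < gweight E x := by
  obtain ⟨j, hj⟩ := Function.ne_iff.1 hx
  exact (Nat.zero_le _).trans_lt <|
    gweight_lt_gweight (x := (0 : Fin n → F)) (by simp) hj (by simp)

/-- `w` is an apex of the word `x` if it lies in the support of `x` and dominates all of it, so
that the closure of the support is the principal ideal of `w`. -/
structure IsApex (E : Fin n → Fin n → Prop) (w : Fin n) (x : Fin n → F) : Prop where
  ne_zero : x w ≠ 0
  gdom_of_ne_zero : ∀ i, x i ≠ 0 → gdom E w i

lemma isApex_single (u : Fin n) : IsApex E u (Pi.single u (1 : F)) where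
  ne_zero := by simp
  gdom_of_ne_zero i hi := by
    obtain rfl : i = u := by simpa using Pi.support_single_subset hi
    exact .refl

namespace IsApex

variable {u v : Fin n}

lemma gweight_le (hx : IsApex E u x) (hy : y u ≠ 0) : gweight E x ≤ gweight E y :=
  gweight_le_gweight fun i hi => ⟨u, hy, hx.gdom_of_ne_zero i hi⟩

lemma gweight_lt_of_not_gdom (hx : IsApex E u x) (hyu : y u ≠ 0) (hyv : y v ≠ 0)
    (huv : ¬ gdom E u v) : gweight E x < gweight E y :=
  gweight_lt_gweight (fun i hi => ⟨u, hyu, hx.gdom_of_ne_zero i hi⟩) hyv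
    fun i hi hiv => huv ((hx.gdom_of_ne_zero i hi).trans hiv)

lemma gweight_lt_gweight_add (hx : IsApex E u x) (hy : IsApex E v y) (huv : ¬ gdom E u v)
    (hvu : ¬ gdom E v u) : gweight E x < gweight E (x + y) := by
  have hxv : x v = 0 := not_not.1 (mt (hx.gdom_of_ne_zero v) huv)
  have hyu : y u = 0 := not_not.1 (mt (hy.gdom_of_ne_zero u) hvu)
  refine hx.gweight_lt_of_not_gdom ?_ ?_ huv
  · simpa [hyu] using hx.ne_zero
  · simpa [hxv] using hy.ne_zero

lemma gpi_lt_gpi_iff_gweight (hx : IsApex E u x) (hy : IsApex E v y) :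
    gpi E v < gpi E u ↔ gweight E y < gweight E x ∧ gweight E (x + y) ≤ gweight E x := by
  rw [gpi_lt_gpi_iff]
  constructor
  · rintro ⟨huv, hvu⟩
    constructor
    · exact gweight_lt_gweight
        (fun i hi => ⟨u, hx.ne_zero, huv.trans (hy.gdom_of_ne_zero i hi)⟩) hx.ne_zero
        fun i hi hiu => hvu ((hy.gdom_of_ne_zero i hi).trans hiu)
    · refine gweight_le_gweight fun i hi => ⟨u, hx.ne_zero, ?_⟩
      by_cases hxi : x i = 0
      · exact huv.trans (hy.gdom_of_ne_zero i (by simpa [hxi] using hi))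
      · exact hx.gdom_of_ne_zero i hxi
  · rintro ⟨hyx, hadd⟩
    have hvu : ¬ gdom E v u := fun h => hyx.not_ge <| gweight_le_gweight fun i hi =>
      ⟨v, hy.ne_zero, h.trans (hx.gdom_of_ne_zero i hi)⟩
    exact ⟨by_contra fun huv => (hx.gweight_lt_gweight_add hy huv hvu).not_ge hadd, hvu⟩

end IsApex

lemma exists_isApex_iff_notMem_span :
    (∃ w, IsApex E w x) ↔ x ∉ Submodule.span F {z | gweight E z < gweight E x} := by
  constructor
  · rintro ⟨w, hw⟩ hx
    have hle : Submodule.span F {z | gweight E z < gweight E x} ≤ LinearMap.ker (.proj w) :=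
      Submodule.span_le.2 fun z hz => by_contra fun hzw => (hw.gweight_le hzw).not_gt hz
    exact hw.ne_zero (hle hx)
  · contrapose!
    intro hx
    rw [pi_eq_sum_univ' x]
    refine Submodule.sum_mem _ fun i _ => ?_
    rw [← pi_eq_sum_univ' x]
    by_cases hi : x i = 0
    · simp [hi]
    obtain ⟨j, hj, hij⟩ : ∃ j, x j ≠ 0 ∧ ¬ gdom E i j := by
      by_contra! h
      exact hx i ⟨hi, h⟩
    exact Submodule.smul_mem _ _ <|
      Submodule.subset_span ((isApex_single i).gweight_lt_of_not_gdom hi hj hij)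

end Weight

section Isometry

variable {n : ℕ} {E : Fin n → Fin n → Prop} {F : Type*} [Field F]

/-- A map of words is a `G`-isometry if it preserves the `G`-weight; linearity is carried by the
type of the map. -/
def IsGIsometry (E : Fin n → Fin n → Prop) (T : (Fin n → F) → Fin n → F) : Prop :=
  ∀ z, gweight E (T z) = gweight E z

/-- A code has a `G`-canonical decomposition if it is `G`-equivalent to a sum of codes `Dfam i`
supported on the levels `i` of `G`. The sum is automatically direct, the levels being disjoint. -/
def HasGCanonicalDecomposition (E : Fin n → Fin n → Prop) (D : Submodule F (Fin n → F)) : Prop :=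
  ∃ (T : (Fin n → F) →ₗ[F] (Fin n → F)) (Dfam : ℕ → Submodule F (Fin n → F)),
    Function.Bijective T ∧ IsGIsometry E T ∧
    (∀ i, ∀ c ∈ Dfam i, ∀ j, c j ≠ 0 → hgt E (gpi E j) = i) ∧
    D.map T = ⨆ i, Dfam i

lemma IsGIsometry.injective {T : (Fin n → F) →ₗ[F] (Fin n → F)} (hT : IsGIsometry E T) :
    Function.Injective T := by
  refine (injective_iff_map_eq_zero T).2 fun x hx => by_contra fun hne => ?_
  exact (gweight_pos hne).ne (by rw [← hT, hx, gweight_zero])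

variable {T : (Fin n → F) ≃ₗ[F] (Fin n → F)}

lemma IsGIsometry.symm (hT : IsGIsometry E T) : IsGIsometry E T.symm := fun z => by
  rw [← hT, T.apply_symm_apply]

lemma IsGIsometry.exists_isApex_apply (hT : IsGIsometry E T) {x : Fin n → F} {u : Fin n}
    (hx : IsApex E u x) : ∃ w, IsApex E w (T x) := by
  refine exists_isApex_iff_notMem_span.2 fun hTx =>
    exists_isApex_iff_notMem_span.1 ⟨u, hx⟩ ?_
  rw [hT x] at hTx
  have hmem := Submodule.mem_map_of_mem (f := T.symm.toLinearMap) hTx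
  rw [← Submodule.span_image, LinearEquiv.coe_coe, T.symm_apply_apply] at hmem
  refine Submodule.span_mono ?_ hmem
  rintro _ ⟨z, hz, rfl⟩
  exact (hT.symm z).trans_lt hz

lemma IsGIsometry.hgt_le (hT : IsGIsometry E T) {x : Fin n → F} {u w : Fin n}
    (hx : IsApex E u x) (hTx : IsApex E w (T x)) : hgt E (gpi E u) ≤ hgt E (gpi E w) := by
  rcases le_or_gt (hgt E (gpi E u)) 1 with hu | hu
  · exact hu.trans (one_le_hgt _)
  obtain ⟨b, hbu, hb⟩ := exists_lt_hgt_add_one_eq hu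
  obtain ⟨v, rfl⟩ := gpi_surjective b
  have hv : IsApex E v (Pi.single v (1 : F)) := isApex_single v
  obtain ⟨w', hw'⟩ := hT.exists_isApex_apply hv
  have hlt : gpi E w' < gpi E w := by
    rw [hTx.gpi_lt_gpi_iff_gweight hw', ← map_add, hT, hT, hT]
    exact (hx.gpi_lt_gpi_iff_gweight hv).1 hbu
  calc hgt E (gpi E u) = hgt E (gpi E v) + 1 := hb.symm
    _ ≤ hgt E (gpi E w') + 1 := Nat.add_le_add_right (hT.hgt_le hv hw') 1
    _ ≤ hgt E (gpi E w) := hgt_strictMono hlt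
termination_by hgt E (gpi E u)

lemma IsGIsometry.hgt_eq (hT : IsGIsometry E T) {x : Fin n → F} {u w : Fin n}
    (hx : IsApex E u x) (hTx : IsApex E w (T x)) : hgt E (gpi E w) = hgt E (gpi E u) :=
  le_antisymm (hT.symm.hgt_le hTx (by rwa [T.symm_apply_apply])) (hT.hgt_le hx hTx)

-- The part of `T (e_u + e_v)` on the level of `u` comes from `T e_u` alone.  If there were nothing
-- else, its weight would be at most that of `e_u`, but `e_u + e_v` is heavier than `e_u`.
lemma IsGIsometry.not_supported_on_level (hT : IsGIsometry E T) {u v : Fin n}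
    (hvu : hgt E (gpi E v) < hgt E (gpi E u)) (huv : ¬ gdom E u v) (k : ℕ) :
    ¬ ∀ j, T (Pi.single u 1 + Pi.single v 1) j ≠ 0 → hgt E (gpi E j) = k := by
  intro hk
  have hu : IsApex E u (Pi.single u (1 : F)) := isApex_single u
  have hv : IsApex E v (Pi.single v (1 : F)) := isApex_single v
  obtain ⟨w, hw⟩ := hT.exists_isApex_apply hu
  obtain ⟨w', hw'⟩ := hT.exists_isApex_apply hv
  have hw_hgt := hT.hgt_eq hu hw
  have hTv : ∀ j, hgt E (gpi E j) = hgt E (gpi E u) → T (Pi.single v 1) j = 0 := by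
    intro j hj
    by_contra hne
    have := hgt_strictMono.monotone (gpi_le_gpi_iff.2 (hw'.gdom_of_ne_zero j hne))
    rw [hT.hgt_eq hv hw'] at this
    omega
  have hku : k = hgt E (gpi E u) := by
    rw [← hw_hgt, hk w]
    simpa [hTv w hw_hgt] using hw.ne_zero
  have hle : gweight E (T (Pi.single u 1 + Pi.single v 1)) ≤ gweight E (T (Pi.single u 1)) :=
    gweight_le_gweight fun j hj =>
      ⟨j, by simpa [hTv j ((hk j hj).trans hku)] using hj, .refl⟩
  rw [hT, hT] at hle
  refine (hu.gweight_lt_gweight_add hv huv fun h => ?_).not_ge hle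
  exact hvu.not_ge (hgt_strictMono.monotone (gpi_le_gpi_iff.2 h))

lemma exists_mem_of_span_singleton_eq_iSup {K V ι : Type*} [DivisionRing K] [AddCommGroup V]
    [Module K V] {y : V} (hy : y ≠ 0) {p : ι → Submodule K V}
    (h : Submodule.span K {y} = ⨆ i, p i) : ∃ i, y ∈ p i := by
  have hatom := nonzero_span_atom (K := K) y hy
  obtain ⟨i, hi⟩ : ∃ i, p i ≠ ⊥ := by
    by_contra! hbot
    exact hatom.1 (by simp [h, hbot])
  have hpi : p i = Submodule.span K {y} := (hatom.le_iff_eq hi).1 (h ▸ le_iSup p i)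
  exact ⟨i, hpi ▸ Submodule.mem_span_singleton_self y⟩

theorem hierarchical_of_hasGCanonicalDecomposition
    (H : ∀ D : Submodule F (Fin n → F), HasGCanonicalDecomposition E D) : Hierarchical E := by
  refine hierarchical_of_forall_hgt_lt fun u v hvu => by_contra fun huv => ?_
  set x : Fin n → F := Pi.single u 1 + Pi.single v 1
  obtain ⟨T₀, Dfam, hbij, hT₀, hsupp, hmap⟩ := H (Submodule.span F {x})
  let T := LinearEquiv.ofBijective T₀ hbij
  have hT : IsGIsometry E T := hT₀
  have hx : x ≠ 0 := fun h => by
    have hne : u ≠ v := by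
      rintro rfl
      exact huv .refl
    simpa [x, hne] using congrFun h u
  rw [Submodule.map_span, Set.image_singleton] at hmap
  obtain ⟨k, hk⟩ := exists_mem_of_span_singleton_eq_iSup (T.map_ne_zero_iff.2 hx) hmap
  exact hT.not_supported_on_level hvu huv k (hsupp k _ hk)

end Isometry

section LevelFiltration

variable {K ι : Type*} [DivisionRing K]

lemma exists_linearMap_add_mem {V : Type*} [AddCommGroup V] [Module K V] (D W : Submodule K V) :
    ∃ c : V →ₗ[K] V, (∀ x, c x ∈ W) ∧ ∀ z ∈ D ⊔ W, z + c z ∈ D := by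
  let f : W →ₗ[K] V ⧸ D := D.mkQ ∘ₗ W.subtype
  obtain ⟨σ, hσ⟩ := f.rangeRestrict.exists_rightInverse_of_surjective f.range_rangeRestrict
  obtain ⟨s, hs⟩ := LinearMap.exists_extend σ
  have hfs (w : W) : f (s (f w)) = f w := by
    have hsσ : s (f w) = σ (f.rangeRestrict w) := LinearMap.congr_fun hs (f.rangeRestrict w)
    rw [hsσ]
    exact congrArg Subtype.val (LinearMap.congr_fun hσ (f.rangeRestrict w))
  refine ⟨-(W.subtype ∘ₗ s ∘ₗ D.mkQ), fun x => W.neg_mem (s (D.mkQ x)).2, fun z hz => ?_⟩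
  obtain ⟨d, hd, w, hw, rfl⟩ := Submodule.mem_sup.1 hz
  have hdw : D.mkQ (d + w) = f ⟨w, hw⟩ := by
    simp [f, (Submodule.Quotient.mk_eq_zero D).2 hd]
  rw [← Submodule.Quotient.mk_eq_zero, ← Submodule.mkQ_apply, map_add]
  calc D.mkQ (d + w) + D.mkQ (-(s (D.mkQ (d + w)) : V))
      = f ⟨w, hw⟩ - f (s (f ⟨w, hw⟩)) := by rw [hdw, map_neg, ← sub_eq_add_neg]; rfl
    _ = 0 := by rw [hfs, sub_self]

variable (K) in
/-- The words supported on a set `s` of coordinates. -/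
def coordSubspace (s : Set ι) : Submodule K (ι → K) := Submodule.pi sᶜ fun _ => ⊥

lemma mem_coordSubspace {s : Set ι} {x : ι → K} :
    x ∈ coordSubspace K s ↔ ∀ j, x j ≠ 0 → j ∈ s := by
  simp only [coordSubspace, Submodule.mem_pi, Submodule.mem_bot, Set.mem_compl_iff]
  exact forall_congr' fun j => not_imp_comm

lemma coordSubspace_mono {s t : Set ι} (h : s ⊆ t) : coordSubspace K s ≤ coordSubspace K t :=
  fun _ hx => mem_coordSubspace.2 fun j hj => h (mem_coordSubspace.1 hx j hj)

lemma exists_add_eq_of_mem_coordSubspace_union {s t : Set ι} {x : ι → K}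
    (hx : x ∈ coordSubspace K (s ∪ t)) :
    ∃ y ∈ coordSubspace K s, ∃ z ∈ coordSubspace K t, y + z = x := by
  refine ⟨s.indicator x, mem_coordSubspace.2 fun j hj => Set.mem_of_indicator_ne_zero hj,
    sᶜ.indicator x, mem_coordSubspace.2 fun j hj => ?_, s.indicator_self_add_compl x⟩
  have hjs := Set.mem_of_indicator_ne_zero hj
  rw [Set.indicator_of_mem hjs] at hj
  exact (mem_coordSubspace.1 hx j hj).resolve_left hjs

/-- A linear map lowers levels, with respect to a level function `h` on the coordinates, if it
sends each word supported on levels at most `m` to a word supported on levels below `m`. -/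
def LowersLevel (h : ι → ℕ) (N : (ι → K) →ₗ[K] (ι → K)) : Prop :=
  ∀ m, ∀ x ∈ coordSubspace K {j | h j ≤ m}, N x ∈ coordSubspace K {j | h j < m}

/-- The leading parts, on level `m`, of the words of `D` of level at most `m`: the words `z`
supported on level `m` such that `D` contains `z + r` for some `r` supported on lower levels. -/
def leadingPart (h : ι → ℕ) (D : Submodule K (ι → K)) (m : ℕ) : Submodule K (ι → K) :=
  (D ⊔ coordSubspace K {j | h j < m}) ⊓ coordSubspace K {j | h j = m}

variable [Finite ι]

lemma exists_lowersLevel_of_corrections (h : ι → ℕ) (c : ℕ → (ι → K) →ₗ[K] (ι → K))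
    (hc : ∀ m x, c m x ∈ coordSubspace K {j | h j < m}) :
    ∃ N, LowersLevel h N ∧ ∀ m, ∀ z ∈ coordSubspace K {j | h j = m}, N z = c m z := by
  classical
  have := Fintype.ofFinite ι
  let N : (ι → K) →ₗ[K] (ι → K) :=
    (Pi.basisFun K ι).constr ℕ fun j => c (h j) (Pi.single j 1)
  have hN (x : ι → K) : N x = ∑ j, x j • c (h j) (Pi.single j 1) :=
    (Pi.basisFun K ι).constr_apply_fintype ℕ _ x
  refine ⟨N, fun m x hx => ?_, fun m z hz => ?_⟩
  · rw [hN]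
    refine Submodule.sum_mem _ fun j _ => ?_
    by_cases hj : x j = 0
    · simp [hj]
    have hjm : h j ≤ m := mem_coordSubspace.1 hx j hj
    exact Submodule.smul_mem _ _ <| coordSubspace_mono (fun k hk => hk.trans_le hjm) (hc _ _)
  · conv_rhs => rw [pi_eq_sum_univ' z, map_sum]
    rw [hN]
    refine Finset.sum_congr rfl fun j _ => ?_
    by_cases hj : z j = 0
    · simp [hj]
    · rw [map_smul, mem_coordSubspace.1 hz j hj]

theorem exists_lowersLevel_map_leadingPart (h : ι → ℕ) (D : Submodule K (ι → K)) :
    ∃ N, LowersLevel h N ∧ (⨆ m, leadingPart h D m).map (1 + N) = D := by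
  choose c hc hcD using fun m => exists_linearMap_add_mem D (coordSubspace K {j | h j < m})
  obtain ⟨N, hN, hNc⟩ := exists_lowersLevel_of_corrections h c hc
  have hmap {m : ℕ} {z : ι → K} (hz : z ∈ leadingPart h D m) : (1 + N) z = z + c m z := by
    rw [LinearMap.add_apply, Module.End.one_apply, hNc m z hz.2]
  refine ⟨N, hN, le_antisymm ?_ fun x hx => ?_⟩
  · rw [Submodule.map_iSup]
    refine iSup_le fun m => ?_
    rintro _ ⟨z, hz, rfl⟩
    exact hmap hz ▸ hcD m z hz.1
  have hdescend (m : ℕ) : ∀ x ∈ D, x ∈ coordSubspace K {j | h j < m} →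
      x ∈ (⨆ m, leadingPart h D m).map (1 + N) := by
    induction m with
    | zero =>
      intro x _ hx
      obtain rfl : x = 0 := funext fun j =>
        by_contra fun hj => absurd (mem_coordSubspace.1 hx j hj) (Nat.not_lt_zero _)
      exact Submodule.zero_mem _
    | succ m ih =>
      intro x hxD hx
      obtain ⟨z, hz, r, hr, rfl⟩ := exists_add_eq_of_mem_coordSubspace_union
        (coordSubspace_mono (t := {j | h j = m} ∪ {j | h j < m})
          (fun j hj => (Nat.lt_succ_iff_lt_or_eq.1 hj).symm) hx)
      have hzD : z ∈ D ⊔ coordSubspace K {j | h j < m} := by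
        rw [← add_sub_cancel_right z r]
        exact Submodule.sub_mem _ (Submodule.mem_sup_left hxD) (Submodule.mem_sup_right hr)
      have hzL : z ∈ leadingPart h D m := ⟨hzD, hz⟩
      have hdiff : z + r - (1 + N) z = r - c m z := by rw [hmap hzL, add_sub_add_left_eq_sub]
      rw [← sub_add_cancel (z + r) ((1 + N) z)]
      refine Submodule.add_mem _ (ih _ ?_ ?_)
        (Submodule.mem_map_of_mem (Submodule.mem_iSup_of_mem m hzL))
      · exact hmap hzL ▸ Submodule.sub_mem _ hxD (hcD m z hzD)
      · exact hdiff ▸ Submodule.sub_mem _ hr (hc m z)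
  obtain ⟨M, hM⟩ := (Set.finite_range h).bddAbove
  exact hdescend (M + 1) x hx <| mem_coordSubspace.2 fun j _ =>
    Nat.lt_succ_of_le (hM ⟨j, rfl⟩)

end LevelFiltration

section Hierarchical

variable {n : ℕ} {E : Fin n → Fin n → Prop} {F : Type*} [Field F]

lemma Hierarchical.gweight_add_le (H : Hierarchical E) {x r : Fin n → F} {w : Fin n}
    (hw : x w ≠ 0) (hr : ∀ j, r j ≠ 0 → hgt E (gpi E j) < hgt E (gpi E w)) :
    gweight E (x + r) ≤ gweight E x := by
  refine gweight_le_gweight fun j hj => ?_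
  by_cases hxj : x j = 0
  · have hrj : r j ≠ 0 := by simpa [hxj] using hj
    exact ⟨w, hw, gpi_le_gpi_iff.1 (H.lt_of_hgt_lt (hr j hrj)).le⟩
  · exact ⟨j, hxj, .refl⟩

lemma Hierarchical.isGIsometry_one_add (H : Hierarchical E) {N : (Fin n → F) →ₗ[F] (Fin n → F)}
    (hN : LowersLevel (fun j => hgt E (gpi E j)) N) : IsGIsometry E ⇑(1 + N) := by
  intro x
  by_cases hx : x = 0
  · rw [hx, map_zero]
  obtain ⟨w, hw, hmax⟩ := Set.exists_max_image {j | x j ≠ 0} (fun j => hgt E (gpi E j))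
    (Set.toFinite _) (Function.ne_iff.1 hx)
  have hNx := mem_coordSubspace.1 (hN _ x (mem_coordSubspace.2 hmax))
  have hNw : N x w = 0 := by_contra fun h => (Set.mem_ofPred.1 (hNx w h)).ne rfl
  refine le_antisymm (H.gweight_add_le hw hNx) ?_
  have hle := H.gweight_add_le (x := x + N x) (r := -N x) (w := w) (by simpa [hNw] using hw)
    fun j hj => hNx j (by simpa using hj)
  rwa [add_neg_cancel_right] at hle

theorem Hierarchical.hasGCanonicalDecomposition (H : Hierarchical E)
    (D : Submodule F (Fin n → F)) : HasGCanonicalDecomposition E D := by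
  obtain ⟨N, hN, hmap⟩ := exists_lowersLevel_map_leadingPart (fun j => hgt E (gpi E j)) D
  have hiso := H.isGIsometry_one_add hN
  let S := LinearEquiv.ofInjectiveEndo (1 + N) hiso.injective
  have hS : IsGIsometry E S := hiso
  refine ⟨S.symm, leadingPart _ D, S.symm.bijective, hS.symm,
    fun i c hc => mem_coordSubspace.1 hc.2, ?_⟩
  exact (Submodule.map_symm_eq_iff S).2 hmap

end Hierarchical

theorem stmt_17_general {n : ℕ} {F : Type*} [Field F] (E : Fin n → Fin n → Prop) :
    Hierarchical E ↔ ∀ D : Submodule F (Fin n → F), HasGCanonicalDecomposition E D :=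
  ⟨Hierarchical.hasGCanonicalDecomposition, hierarchical_of_hasGCanonicalDecomposition⟩

/-- the poset `P_G` determined by the reduced canonical form of `G` is
hierarchical iff every linear code `D ⊆ F_q^n` admits a `G`-canonical decomposition,
i.e. `D` is `G`-equivalent to a code `D_1 ⊕ ⋯ ⊕ D_{h_G}` with `supp(D_i) ⊆ V_i` for
each level `i`. -/
theorem stmt_17 {n : ℕ} (hn : 1 ≤ n) {F : Type*} [Field F] [Fintype F]
    (E : Fin n → Fin n → Prop) (hE : Irreflexive E) :
    Hierarchical E ↔
      ∀ D : Submodule F (Fin n → F),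
        ∃ (T : (Fin n → F) →ₗ[F] (Fin n → F)) (Dfam : ℕ → Submodule F (Fin n → F)),
          Function.Bijective T ∧
          (∀ z : Fin n → F, gweight E (T z) = gweight E z) ∧
          (∀ i : ℕ, ∀ c ∈ Dfam i, ∀ j : Fin n, c j ≠ 0 → hgt E (gpi E j) = i) ∧
          Submodule.map T D = ⨆ i : ℕ, Dfam i :=
  stmt_17_general E
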